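/- Let m ≥ 2, let μ be a probability measure on B_r(0) ⊂ ℝ^m invariant under rotations about the origin, let ε ∈ (0,1), and let α = r(1+ε). Then for every z ∈ B_r(0) with ‖z‖ ≥ εr, H^{(α,μ,m)}(z) ≥ rε²/8 − r·√(πm/2)·(1 − ε²/16)^{(m-2)/2}, where H^{(α,μ,m)}(z) := ∫_{B_r(0)}(α − ‖x‖) dμ(x) − ∫_{B_α(z) ∩ B_r(0)}(α − d(z,x)) dμ(x). -/

import Mathlib

open MeasureTheory Metric Real
open scoped ENNReal

/-- `H^{(α,μ,m)}(z) = ∫_{B_r(0)}(α − ‖x‖) dμ(x) − ∫_{B_α(z) ∩ B_r(0)}(α − d(z,x)) dμ(x)`. -/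
noncomputable def Hfun (m : ℕ) (α r : ℝ) (μ : Measure (EuclideanSpace ℝ (Fin m)))
    (z : EuclideanSpace ℝ (Fin m)) : ℝ :=
  (∫ x in closedBall (0 : EuclideanSpace ℝ (Fin m)) r, (α - ‖x‖) ∂μ) -
    ∫ x in closedBall z α ∩ closedBall (0 : EuclideanSpace ℝ (Fin m)) r,
      (α - dist z x) ∂μ

/-- A cone inside the unit ball has small volume (it lies in a smaller ball). -/
lemma cone_vol (m : ℕ) (t : ℝ) (ht0 : 0 ≤ t) (ht : t ^ 2 ≤ 1 / 2)
    (x : EuclideanSpace ℝ (Fin m)) :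
    (volume.restrict (ball (0 : EuclideanSpace ℝ (Fin m)) 1))
      {y | t * ‖x‖ * ‖y‖ < inner ℝ x y} ≤
      ENNReal.ofReal (Real.sqrt (1 - t ^ 2) ^ m) *
        volume (ball (0 : EuclideanSpace ℝ (Fin m)) 1) := by
  have hmeas : MeasurableSet {y : EuclideanSpace ℝ (Fin m) | t * ‖x‖ * ‖y‖ < inner ℝ x y} :=
    (isOpen_lt (by fun_prop) (by fun_prop)).measurableSet
  rw [Measure.restrict_apply hmeas]
  have key : {y : EuclideanSpace ℝ (Fin m) | t * ‖x‖ * ‖y‖ < inner ℝ x y} ∩ ball 0 1 ⊆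
      closedBall ((t / ‖x‖) • x) (Real.sqrt (1 - t ^ 2)) := by
    rintro y ⟨hy, hy1⟩
    simp only [Set.mem_ofPred_eq] at hy
    rw [mem_ball_zero_iff] at hy1
    have hx : x ≠ 0 := by
      rintro rfl
      simp at hy
    have hx' : 0 < ‖x‖ := norm_pos_iff.mpr hx
    rw [mem_closedBall, dist_eq_norm]
    apply Real.le_sqrt_of_sq_le
    rw [norm_sub_sq_real, inner_smul_right, norm_smul, Real.norm_eq_abs, abs_of_nonneg (by positivity),
      div_mul_cancel₀ _ hx'.ne', real_inner_comm]
    have h1 : t * (t * ‖y‖) ≤ t / ‖x‖ * inner ℝ x y := by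
      rw [div_mul_eq_mul_div, le_div_iff₀ hx']
      nlinarith
    have h0 := norm_nonneg y
    nlinarith [mul_nonneg h0 (sub_nonneg.mpr hy1.le), mul_nonneg (sub_nonneg.mpr ht) (sub_nonneg.mpr hy1.le)]
  refine (measure_mono key).trans ?_
  rw [Measure.addHaar_closedBall _ _ (Real.sqrt_nonneg _)]
  simp

lemma cap_bound (m : ℕ) (hm : 2 ≤ m) (t : ℝ) (ht0 : 0 ≤ t) (ht : t ^ 2 ≤ 1 / 2)
    (μ : Measure (EuclideanSpace ℝ (Fin m))) [IsProbabilityMeasure μ]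
    (hrot : ∀ R : EuclideanSpace ℝ (Fin m) ≃ₗᵢ[ℝ] EuclideanSpace ℝ (Fin m),
      μ.map R = μ) (z : EuclideanSpace ℝ (Fin m)) (hz : z ≠ 0) :
    μ {x | t * ‖x‖ * ‖z‖ < inner ℝ x z} ≤ ENNReal.ofReal (Real.sqrt (1 - t ^ 2) ^ m) := by
  have : Nonempty (Fin m) := ⟨⟨0, by omega⟩⟩
  set ν := (volume : Measure (EuclideanSpace ℝ (Fin m))).restrict (ball 0 1) with hν
  have hmeas (z : EuclideanSpace ℝ (Fin m)) :
      MeasurableSet {x : EuclideanSpace ℝ (Fin m) | t * ‖x‖ * ‖z‖ < inner ℝ x z} :=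
    (isOpen_lt (by fun_prop) (by fun_prop)).measurableSet
  have hz' : 0 < ‖z‖ := norm_pos_iff.mpr hz
  have hinv : ∀ y : EuclideanSpace ℝ (Fin m), y ≠ 0 →
      μ {x | t * ‖x‖ * ‖y‖ < inner ℝ x y} = μ {x | t * ‖x‖ * ‖z‖ < inner ℝ x z} := by
    intro y hy
    have hy' : 0 < ‖y‖ := norm_pos_iff.mpr hy
    set w := (‖z‖ / ‖y‖) • y with hw
    have hwn : ‖w‖ = ‖z‖ := by
      rw [hw, norm_smul, Real.norm_eq_abs, abs_of_nonneg (by positivity), div_mul_cancel₀ _ hy'.ne']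
    set R := (ℝ ∙ (w - z))ᗮ.reflection with hR
    have hRw : R w = z := Submodule.reflection_sub hwn
    conv_rhs => rw [← hrot R]
    rw [Measure.map_apply R.continuous.measurable (hmeas z)]
    congr 1
    ext x
    simp only [Set.mem_ofPred_eq, Set.mem_preimage]
    rw [← hRw, LinearIsometryEquiv.inner_map_map, R.norm_map, R.norm_map, hwn, hw, inner_smul_right,
      div_mul_eq_mul_div, lt_div_iff₀ hy']
    constructor
    · intro h; nlinarith
    · intro h
      by_contra hcon
      push Not at hcon
      nlinarith
  have hopen : MeasurableSet {p : EuclideanSpace ℝ (Fin m) × EuclideanSpace ℝ (Fin m) |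
      t * ‖p.1‖ * ‖p.2‖ < inner ℝ p.1 p.2} :=
    (isOpen_lt (by fun_prop) (by fun_prop)).measurableSet
  have e1 := Measure.prod_apply (μ := μ) (ν := ν) hopen
  have e2 := Measure.prod_apply_symm (μ := μ) (ν := ν) hopen
  have hne : ∀ᵐ y ∂ν, y ≠ 0 := by
    apply ae_restrict_of_ae
    have : Nontrivial (EuclideanSpace ℝ (Fin m)) := ⟨z, 0, hz⟩
    simp [ae_iff]
  have e3 : ∫⁻ y, μ ((fun x => (x, y)) ⁻¹' {p : EuclideanSpace ℝ (Fin m) × EuclideanSpace ℝ (Fin m) |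
      t * ‖p.1‖ * ‖p.2‖ < inner ℝ p.1 p.2}) ∂ν =
      μ {x | t * ‖x‖ * ‖z‖ < inner ℝ x z} * volume (ball (0 : EuclideanSpace ℝ (Fin m)) 1) := by
    have hc : (fun y => μ ((fun x => (x, y)) ⁻¹'
        {p : EuclideanSpace ℝ (Fin m) × EuclideanSpace ℝ (Fin m) |
          t * ‖p.1‖ * ‖p.2‖ < inner ℝ p.1 p.2})) =ᵐ[ν]
        fun _ => μ {x | t * ‖x‖ * ‖z‖ < inner ℝ x z} :=
      hne.mono fun y hy => hinv y hy
    rw [lintegral_congr_ae hc, lintegral_const, hν, Measure.restrict_apply_univ]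
  have e4 : ∫⁻ x, ν (Prod.mk x ⁻¹' {p : EuclideanSpace ℝ (Fin m) × EuclideanSpace ℝ (Fin m) |
      t * ‖p.1‖ * ‖p.2‖ < inner ℝ p.1 p.2}) ∂μ ≤
      ENNReal.ofReal (Real.sqrt (1 - t ^ 2) ^ m) *
        volume (ball (0 : EuclideanSpace ℝ (Fin m)) 1) := by
    refine (lintegral_mono fun x => cone_vol m t ht0 ht x).trans ?_
    rw [lintegral_const, measure_univ, mul_one]
  rw [← e1, e2, e3] at e4
  exact (ENNReal.mul_le_mul_iff_left (measure_ball_pos volume _ one_pos).ne'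
    measure_ball_lt_top.ne).mp e4

lemma pointwise_good (m : ℕ) (r ε : ℝ) (hr : 0 < r) (hε : ε ∈ Set.Ioo (0 : ℝ) 1)
    (z x : EuclideanSpace ℝ (Fin m)) (hz : ε * r ≤ ‖z‖)
    (hx : ‖x‖ ≤ r) (h : inner ℝ x z ≤ ε / 4 * ‖x‖ * ‖z‖) :
    r * ε ^ 2 / 8 ≤ dist z x - ‖x‖ := by
  obtain ⟨h0, h1⟩ := hε
  have hs := norm_nonneg x
  have he : dist z x ^ 2 = ‖z‖ ^ 2 - 2 * inner ℝ x z + ‖x‖ ^ 2 := by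
    rw [dist_eq_norm, norm_sub_sq_real, real_inner_comm]
  have hzx : ε * ‖x‖ ≤ ‖z‖ := by nlinarith
  have hpos : 0 < ε * r := by positivity
  have hA : ‖x‖ ^ 2 + (ε * r) ^ 2 / 2 ≤ dist z x ^ 2 := by
    rw [he]
    nlinarith [mul_le_mul_of_nonneg_right hzx (norm_nonneg z)]
  have : (‖x‖ + r * ε ^ 2 / 8) ^ 2 ≤ dist z x ^ 2 := by
    refine le_trans ?_ hA
    have a1 : ‖x‖ * (r * ε ^ 2) ≤ r * (r * ε ^ 2) := by gcongr
    have a2 : (r * ε ^ 2) ^ 2 ≤ (r * ε) ^ 2 := by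
      apply pow_le_pow_left₀ (by positivity)
      gcongr
      nlinarith
    nlinarith
  have := (pow_le_pow_iff_left₀ (by positivity) dist_nonneg two_ne_zero).mp this
  linarith

/-- For `m ≥ 2`, `μ` a rotation-invariant probability measure on `B_r(0) ⊂ ℝ^m`,
`ε ∈ (0,1)` and `α = r(1+ε)`: for every `z ∈ B_r(0)` with `‖z‖ ≥ εr`,
`H^{(α,μ,m)}(z) ≥ rε²/8 − r √(πm/2) (1 − ε²/16)^{(m−2)/2}`. -/
theorem stmt13 (m : ℕ) (hm : 2 ≤ m) (r ε : ℝ) (hr : 0 < r) (hε : ε ∈ Set.Ioo (0 : ℝ) 1)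
    (μ : Measure (EuclideanSpace ℝ (Fin m))) [IsProbabilityMeasure μ]
    (hsupp : μ (closedBall 0 r) = 1)
    (hrot : ∀ R : EuclideanSpace ℝ (Fin m) ≃ₗᵢ[ℝ] EuclideanSpace ℝ (Fin m),
      μ.map R = μ) :
    ∀ z ∈ closedBall (0 : EuclideanSpace ℝ (Fin m)) r, ε * r ≤ ‖z‖ →
      r * ε ^ 2 / 8 -
          r * Real.sqrt (π * m / 2) * (1 - ε ^ 2 / 16) ^ (((m : ℝ) - 2) / 2) ≤
        Hfun m (r * (1 + ε)) r μ z := by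
  intro z hzr hz
  obtain ⟨h0, h1⟩ := hε
  rw [mem_closedBall_zero_iff] at hzr
  have hz0 : z ≠ 0 := by
    rintro rfl
    have : 0 < ε * r := by positivity
    simp at hz
    linarith
  set α := r * (1 + ε) with hα
  set q := 1 - ε ^ 2 / 16 with hq
  have hq0 : 0 < q := by nlinarith
  have hq1 : q ≤ 1 := by nlinarith
  set E := {x : EuclideanSpace ℝ (Fin m) | ε / 4 * ‖x‖ * ‖z‖ < inner ℝ x z} with hE
  have hEm : MeasurableSet E := (isOpen_lt (by fun_prop) (by fun_prop)).measurableSet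
  have hcap : μ.real E ≤ q ^ (((m : ℝ) - 2) / 2) := by
    have h := cap_bound m hm (ε / 4) (by positivity) (by nlinarith) μ hrot z hz0
    have h' : μ.real E ≤ Real.sqrt (1 - (ε / 4) ^ 2) ^ m :=
      ENNReal.toReal_le_of_le_ofReal (by positivity) h
    refine h'.trans ?_
    have : 1 - (ε / 4) ^ 2 = q := by rw [hq]; ring
    rw [this, Real.sqrt_eq_rpow, ← Real.rpow_natCast, ← Real.rpow_mul hq0.le]
    apply Real.rpow_le_rpow_of_exponent_ge hq0 hq1
    linarith
  have hae : ∀ᵐ x ∂μ, x ∈ closedBall (0 : EuclideanSpace ℝ (Fin m)) r := by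
    rw [← prob_compl_eq_zero_iff measurableSet_closedBall] at hsupp
    exact hsupp
  have hI1 : Integrable (fun x : EuclideanSpace ℝ (Fin m) => α - ‖x‖) μ := by
    refine Integrable.of_bound (C := |α| + r) (by fun_prop) ?_
    filter_upwards [hae] with x hx
    rw [mem_closedBall_zero_iff] at hx
    refine (norm_sub_le _ _).trans ?_
    simpa using hx
  have hI2 : Integrable (fun x : EuclideanSpace ℝ (Fin m) => α - dist z x) μ := by
    refine Integrable.of_bound (C := |α| + (r + r)) (by fun_prop) ?_
    filter_upwards [hae] with x hx
    rw [mem_closedBall_zero_iff] at hx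
    refine (norm_sub_le _ _).trans ?_
    have : dist z x ≤ ‖z‖ + ‖x‖ := by rw [dist_eq_norm]; exact norm_sub_le _ _
    rw [Real.norm_eq_abs, Real.norm_eq_abs, abs_of_nonneg (dist_nonneg (x := z) (y := x))]
    linarith
  have hI2' := hI2.indicator (measurableSet_closedBall (x := z) (ε := α))
  have hH : Hfun m α r μ z = ∫ x, ((α - ‖x‖) -
      (closedBall z α).indicator (fun x => α - dist z x) x) ∂μ := by
    rw [integral_sub hI1 hI2', integral_indicator measurableSet_closedBall, Hfun,
      ← Measure.restrict_restrict measurableSet_closedBall,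
      Measure.restrict_eq_self_of_ae_mem hae]
  have hlow : ∫ x, (r * ε ^ 2 / 8 - E.indicator (fun _ => r * (9 / 8)) x) ∂μ ≤
      Hfun m α r μ z := by
    rw [hH]
    apply integral_mono_ae
    · exact (integrable_const _).sub ((integrable_const _).indicator hEm)
    · exact hI1.sub hI2'
    · filter_upwards [hae] with x hx
      rw [mem_closedBall_zero_iff] at hx
      have hε2 : r * ε ^ 2 ≤ r * ε := by
        gcongr
        nlinarith
      have hε3 : 0 < r * ε := by positivity
      have hε4 : r * ε ≤ r := by nlinarith
      have htri : ‖x‖ ≤ ‖z‖ + dist z x := by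
        have := norm_sub_norm_le x z
        rw [dist_comm, dist_eq_norm]; linarith
      by_cases hxE : x ∈ E
      · by_cases hxA : x ∈ closedBall z α
        · simp only [Set.indicator_of_mem hxE, Set.indicator_of_mem hxA]
          linarith
        · simp only [Set.indicator_of_mem hxE, Set.indicator_of_notMem hxA]
          linarith
      · by_cases hxA : x ∈ closedBall z α
        · simp only [Set.indicator_of_notMem hxE, Set.indicator_of_mem hxA]
          have := pointwise_good m r ε hr ⟨h0, h1⟩ z x hz hx (not_lt.mp hxE)
          linarith
        · simp only [Set.indicator_of_notMem hxE, Set.indicator_of_notMem hxA]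
          linarith
  refine le_trans ?_ hlow
  rw [integral_sub (integrable_const _) ((integrable_const _).indicator hEm),
    integral_indicator_const _ hEm]
  simp only [integral_const, probReal_univ, smul_eq_mul, one_mul]
  have hsq : 9 / 8 ≤ Real.sqrt (π * m / 2) := by
    apply Real.le_sqrt_of_sq_le
    have : (2 : ℝ) ≤ m := by exact_mod_cast hm
    nlinarith [Real.pi_gt_three]
  have : μ.real E * (r * (9 / 8)) ≤ q ^ (((m : ℝ) - 2) / 2) * (r * Real.sqrt (π * m / 2)) := by
    gcongr
  linarith
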